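/- For every real number x > 0 and every integer k ≥ 1, the double inequality (k−1)!/x^k + k!/(2x^{k+1}) < (−1)^{k+1} ψ^{(k)}(x) < (k−1)!/x^k + k!/x^{k+1} holds. -/

import Mathlib

/-!
The functional equation `ψ (x + 1) = ψ x + 1 / x` and the bounds `log x ≤ ψ (x + 1) ≤ log (x + 1)`
(from the log-convexity of `Γ`) give the expansion
`ψ x = ψ 1 + ∑ (1 / (n + 1) - 1 / (x + n))`. Differentiating termwise,
`(-1) ^ (k + 1) ψ⁽ᵏ⁾ x = ∑ k! / (x + n) ^ (k + 1)` for `k ≥ 1`.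

Both bounds in the theorem are values at `x` of functions of the form
`B y = (k - 1)! / y ^ k + c * k! / y ^ (k + 1)`, with `c = 1 / 2` and `c = 1`. Since `B` tends to `0`
at infinity, `B x = ∑ (B (x + n) - B (x + n + 1))`, so it suffices to compare
`k! / y ^ (k + 1)` with `B y - B (y + 1)`. The two comparisons are
`1 / y ^ k - 1 / (y + 1) ^ k < k / 2 * (1 / y ^ (k + 1) + 1 / (y + 1) ^ (k + 1))`
(trapezoid rule for a convex function) and
`k / (y + 1) ^ (k + 1) < 1 / y ^ k - 1 / (y + 1) ^ k` (Bernoulli's inequality).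
-/

open Real

/-- The digamma function `ψ = Γ′/Γ`. -/
noncomputable def digamma (x : ℝ) : ℝ := deriv Real.Gamma x / Real.Gamma x

/-- The `i`-th derivative of the digamma function, `ψ⁽ⁱ⁾`, with `ψ⁽⁰⁾ = ψ`. -/
noncomputable def polygamma (i : ℕ) : ℝ → ℝ := deriv^[i] digamma

open Filter Topology Set

/-! ### Comparison of a single term -/

/-- Trapezoid inequality for `t ↦ t ^ (-(k + 2))` on `[y, y + 1]`, written with `a = 1 / y` and
`b = 1 / (y + 1)`, for which `a - b = a * b`. -/
lemma trapezoid_aux {a b : ℝ} (hb : 0 < b) (hba : b < a) (hab : a - b = a * b) (k : ℕ) :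
    a ^ (k + 1) - b ^ (k + 1) < ((k : ℝ) + 1) / 2 * (a ^ (k + 2) + b ^ (k + 2)) := by
  induction k with
  | zero =>
    have : 0 < (a - b) ^ 2 := by have := sub_pos.2 hba; positivity
    norm_num
    nlinarith
  | succ k ih =>
    -- Averaging the two ways of splitting off a factor.
    have h1 : a ^ (k + 2) - b ^ (k + 2) =
        (a + b) / 2 * (a ^ (k + 1) - b ^ (k + 1)) + a * b * (a ^ (k + 1) + b ^ (k + 1)) / 2 := by
      rw [← hab]; ring
    -- Chebyshev's inequality.
    have h2 : 0 ≤ (a - b) * (a ^ (k + 2) - b ^ (k + 2)) :=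
      mul_nonneg (sub_pos.2 hba).le (sub_nonneg.2 (pow_le_pow_left₀ hb.le hba.le _))
    have h3 := mul_lt_mul_of_pos_left ih (show 0 < (a + b) / 2 by linarith)
    have h4 := mul_nonneg (show (0 : ℝ) ≤ k + 1 by positivity) h2
    have e1 : k + 1 + 1 = k + 2 := rfl
    have e2 : k + 1 + 2 = k + 3 := rfl
    rw [e1, e2, h1]
    push_cast
    ring_nf at h2 h3 h4 ⊢
    nlinarith

lemma bernoulli_aux {y : ℝ} (hy : 0 < y) (k : ℕ) :
    ((k : ℝ) + 1) / (y + 1) ^ (k + 2) < 1 / y ^ (k + 1) - 1 / (y + 1) ^ (k + 1) := by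
  have h1 : 1 + ((k + 1 : ℕ) : ℝ) * (1 / y) ≤ (1 + 1 / y) ^ (k + 1) :=
    one_add_mul_le_pow (by have : 0 < 1 / y := by positivity
                           linarith) _
  have h2 : (1 + 1 / y) ^ (k + 1) = (y + 1) ^ (k + 1) / y ^ (k + 1) := by
    rw [← div_pow]; congr 1; field_simp
  have h3 : ((k : ℝ) + 1) / (y + 1) < ((k : ℝ) + 1) / y := by
    gcongr; linarith
  rw [h2] at h1
  have h4 : ((k : ℝ) + 1) / (y + 1) + 1 < (y + 1) ^ (k + 1) / y ^ (k + 1) := by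
    push_cast at h1
    rw [mul_one_div] at h1
    linarith
  have hp : 0 < 1 / (y + 1) ^ (k + 1) := by positivity
  have h5 := mul_lt_mul_of_pos_right h4 hp
  have e1 : (((k : ℝ) + 1) / (y + 1) + 1) * (1 / (y + 1) ^ (k + 1)) =
      ((k : ℝ) + 1) / (y + 1) ^ (k + 2) + 1 / (y + 1) ^ (k + 1) := by
    field_simp
    ring
  have e2 : (y + 1) ^ (k + 1) / y ^ (k + 1) * (1 / (y + 1) ^ (k + 1)) = 1 / y ^ (k + 1) := by
    field_simp
  rw [e1, e2] at h5
  linarith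

/-! ### Telescoping -/

/-- The common shape of the two bounds (divided by `k!`, with `k + 1` in place of `k`). -/
noncomputable def boundFun (k : ℕ) (c y : ℝ) : ℝ := 1 / y ^ (k + 1) + c * (k + 1) / y ^ (k + 2)

lemma hasSum_boundFun (k : ℕ) {c x : ℝ} (hc : 0 ≤ c) (hx : 0 < x) :
    HasSum (fun n : ℕ => boundFun k c (x + n) - boundFun k c (x + n + 1)) (boundFun k c x) := by
  rw [hasSum_iff_tendsto_nat_of_nonneg]
  · have h : ∀ N : ℕ, ∑ n ∈ Finset.range N, (boundFun k c (x + n) - boundFun k c (x + n + 1)) =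
        boundFun k c x - boundFun k c (x + N) := by
      intro N
      have := Finset.sum_range_sub' (fun n : ℕ => boundFun k c (x + n)) N
      simpa [add_assoc] using this
    simp_rw [h]
    have hN : Tendsto (fun N : ℕ => x + (N : ℝ)) atTop atTop :=
      tendsto_atTop_add_const_left _ _ tendsto_natCast_atTop_atTop
    have h1 : Tendsto (fun N : ℕ => boundFun k c (x + N)) atTop (𝓝 0) := by
      have p (m : ℕ) (d : ℝ) : Tendsto (fun N : ℕ => d / (x + (N : ℝ)) ^ (m + 1)) atTop (𝓝 0) :=
        ((tendsto_pow_atTop (by omega)).comp hN).const_div_atTop d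
      simpa [boundFun] using (p k 1).add (p (k + 1) (c * (k + 1)))
    simpa using tendsto_const_nhds.sub h1
  · intro n
    have : (0 : ℝ) < x + n := by positivity
    rw [sub_nonneg]
    unfold boundFun
    have hle : x + (n : ℝ) ≤ x + n + 1 := by linarith
    gcongr

lemma term_lt_upper {y : ℝ} (hy : 0 < y) (k : ℕ) :
    ((k : ℝ) + 1) / y ^ (k + 2) < boundFun k 1 y - boundFun k 1 (y + 1) := by
  have := bernoulli_aux hy k
  unfold boundFun
  rw [one_mul]
  linarith

lemma lower_lt_term {y : ℝ} (hy : 0 < y) (k : ℕ) :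
    boundFun k (1 / 2) y - boundFun k (1 / 2) (y + 1) < ((k : ℝ) + 1) / y ^ (k + 2) := by
  have := trapezoid_aux (a := 1 / y) (b := 1 / (y + 1)) (by positivity)
    (one_div_lt_one_div_of_lt hy (by linarith)) (by field_simp; ring) k
  unfold boundFun
  simp only [div_eq_mul_inv, one_mul, inv_pow] at this ⊢
  linarith

lemma summable_term {x : ℝ} (hx : 0 < x) (k : ℕ) :
    Summable (fun n : ℕ => ((k : ℝ) + 1) / (x + n) ^ (k + 2)) :=
  Summable.of_nonneg_of_le (fun n => by positivity)
    (fun n => (term_lt_upper (show 0 < x + (n : ℝ) by positivity) k).le)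
    (hasSum_boundFun k zero_le_one hx).summable

lemma tsum_lt_upper {x : ℝ} (hx : 0 < x) (k : ℕ) :
    ∑' n : ℕ, ((k : ℝ) + 1) / (x + n) ^ (k + 2) < boundFun k 1 x := by
  have h := hasSum_boundFun k zero_le_one hx
  rw [← h.tsum_eq]
  have hlt (n : ℕ) := term_lt_upper (show 0 < x + (n : ℝ) by positivity) k
  exact Summable.tsum_lt_tsum (fun n => (hlt n).le) (hlt 0) (summable_term hx k) h.summable

lemma lower_lt_tsum {x : ℝ} (hx : 0 < x) (k : ℕ) :
    boundFun k (1 / 2) x < ∑' n : ℕ, ((k : ℝ) + 1) / (x + n) ^ (k + 2) := by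
  have h := hasSum_boundFun k (c := 1 / 2) (by norm_num) hx
  rw [← h.tsum_eq]
  have hlt (n : ℕ) := lower_lt_term (show 0 < x + (n : ℝ) by positivity) k
  exact Summable.tsum_lt_tsum (fun n => (hlt n).le) (hlt 0) h.summable (summable_term hx k)

/-! ### Series expansions of the polygamma functions -/

lemma differentiableAt_logGamma {x : ℝ} (hx : 0 < x) :
    DifferentiableAt ℝ (log ∘ Real.Gamma) x := by
  refine ((Real.differentiableAt_Gamma ?_).log (Real.Gamma_ne_zero ?_)) <;>
  exact fun m ↦ ne_of_gt (by have : (0 : ℝ) ≤ m := m.cast_nonneg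
                             linarith)

lemma digamma_eq_deriv {x : ℝ} (hx : 0 < x) : digamma x = deriv (log ∘ Real.Gamma) x := by
  rw [Function.comp_def, deriv.log (Real.differentiableAt_Gamma fun m ↦ ne_of_gt (by
    have : (0 : ℝ) ≤ m := m.cast_nonneg
    linarith)) (Real.Gamma_pos_of_pos hx).ne']
  rfl

lemma logGamma_add_one {x : ℝ} (hx : 0 < x) :
    (log ∘ Real.Gamma) (x + 1) = (log ∘ Real.Gamma) x + log x := by
  simp only [Function.comp_apply, Real.Gamma_add_one hx.ne',
    log_mul hx.ne' (Real.Gamma_pos_of_pos hx).ne', add_comm]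

lemma digamma_add_one {x : ℝ} (hx : 0 < x) : digamma (x + 1) = digamma x + 1 / x := by
  rw [digamma_eq_deriv hx, digamma_eq_deriv (by positivity), ← deriv_comp_add_const, one_div,
    ← deriv_log, ← deriv_add (differentiableAt_logGamma hx) (differentiableAt_log hx.ne')]
  apply EventuallyEq.deriv_eq
  filter_upwards [eventually_gt_nhds hx] with y hy using logGamma_add_one hy

lemma log_le_digamma_add_one {x : ℝ} (hx : 0 < x) : log x ≤ digamma (x + 1) := by
  rw [digamma_eq_deriv (by positivity)]
  refine (le_of_eq ?_).trans <| convexOn_log_Gamma.slope_le_deriv (mem_Ioi.mpr hx)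
    (mem_Ioi.mpr (show 0 < x + 1 by positivity)) (by linarith)
    (differentiableAt_logGamma <| by positivity)
  rw [slope_def_field, show x + 1 - x = (1 : ℝ) by ring, div_one, logGamma_add_one hx,
    add_sub_cancel_left]

lemma digamma_le_log {x : ℝ} (hx : 0 < x) : digamma x ≤ log x := by
  rw [digamma_eq_deriv hx]
  refine (convexOn_log_Gamma.deriv_le_slope (mem_Ioi.mpr hx)
    (mem_Ioi.mpr (show 0 < x + 1 by positivity)) (by linarith)
    (differentiableAt_logGamma hx)).trans (le_of_eq ?_)
  rw [slope_def_field, show x + 1 - x = (1 : ℝ) by ring, div_one, logGamma_add_one hx,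
    add_sub_cancel_left]

lemma digamma_add_nat {x : ℝ} (hx : 0 < x) (N : ℕ) :
    digamma (x + N) = digamma x + ∑ n ∈ Finset.range N, 1 / (x + n) := by
  induction N with
  | zero => simp
  | succ N ih =>
    rw [Finset.sum_range_succ, ← add_assoc, ← ih, ← digamma_add_one (by positivity)]
    push_cast
    rw [add_assoc]

/-- `ψ (x + N) = log N + o(1)`, since `ψ (x + N)` lies between `log (N + x - 1)` and `log (N + x)`. -/
lemma tendsto_digamma_sub_log {x : ℝ} (hx : 0 < x) :
    Tendsto (fun N : ℕ => digamma (x + N) - log (N : ℝ)) atTop (𝓝 0) := by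
  have hlog (c : ℝ) : Tendsto (fun N : ℕ => log ((N : ℝ) + c) - log (N : ℝ)) atTop (𝓝 0) :=
    (Real.tendsto_log_comp_add_sub_log c).comp tendsto_natCast_atTop_atTop
  refine tendsto_of_tendsto_of_tendsto_of_le_of_le' (hlog (x - 1)) (hlog x) ?_ ?_
  · filter_upwards [eventually_ge_atTop 1] with N hN
    have hN : (1 : ℝ) ≤ N := by exact_mod_cast hN
    have := log_le_digamma_add_one (show 0 < (N : ℝ) + (x - 1) by linarith)
    rw [show (N : ℝ) + (x - 1) + 1 = x + N by ring] at this
    linarith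
  · filter_upwards with N
    have := digamma_le_log (show 0 < x + (N : ℝ) by positivity)
    rw [add_comm (N : ℝ) x]
    linarith

lemma tendsto_sum_digamma {x : ℝ} (hx : 0 < x) :
    Tendsto (fun N : ℕ => ∑ n ∈ Finset.range N, (1 / (1 + (n : ℝ)) - 1 / (x + n))) atTop
      (𝓝 (digamma x - digamma 1)) := by
  have h := ((tendsto_digamma_sub_log one_pos).sub (tendsto_digamma_sub_log hx)).add_const
    (digamma x - digamma 1)
  rw [sub_zero, zero_add] at h
  refine h.congr fun N => ?_
  rw [digamma_add_nat hx, digamma_add_nat one_pos, Finset.sum_sub_distrib]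
  ring

lemma hasDerivAt_digamma_term {y : ℝ} (n : ℕ) (hy : 0 < y) :
    HasDerivAt (fun z : ℝ => 1 / (1 + (n : ℝ)) - 1 / (z + n)) (1 / (y + n) ^ 2) y := by
  have hp : y + n ≠ 0 := by positivity
  have := ((((hasDerivAt_id y).add_const (n : ℝ)).inv hp).const_sub (1 / (1 + (n : ℝ))))
  simpa [one_div, neg_div] using this

lemma norm_digamma_term_le {c : ℝ} (hc : 0 < c) (n : ℕ) (y : ℝ) (hy : y ∈ Ioi c) :
    ‖1 / (y + n) ^ 2‖ ≤ 1 / (c + n) ^ 2 := by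
  have hy : c < y := hy
  have : 0 < y := hc.trans hy
  rw [Real.norm_of_nonneg (by positivity)]
  gcongr

lemma hasDerivAt_digamma {x : ℝ} (hx : 0 < x) :
    HasDerivAt digamma (∑' n : ℕ, 1 / (x + n) ^ 2) x := by
  -- A half-line containing both `x` and the point `1`, where all terms of the series vanish.
  obtain ⟨c, hc, hcx⟩ := exists_between (lt_min hx one_pos)
  have hu : Summable (fun n : ℕ => 1 / (c + n) ^ 2) := by simpa using summable_term hc 0
  have hxm : x ∈ Ioi c := hcx.trans_le (min_le_left _ _)
  have h1m : (1 : ℝ) ∈ Ioi c := hcx.trans_le (min_le_right _ _)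
  have h0 : Summable (fun n : ℕ => 1 / (1 + (n : ℝ)) - 1 / ((1 : ℝ) + n)) := by simp
  have hd (n : ℕ) (y : ℝ) (hy : y ∈ Ioi c) := hasDerivAt_digamma_term n (hc.trans hy)
  have key := hasDerivAt_tsum_of_isPreconnected hu isOpen_Ioi isPreconnected_Ioi hd
    (norm_digamma_term_le hc) h1m h0 hxm
  refine (key.const_add (digamma 1)).congr_of_eventuallyEq ?_
  filter_upwards [Ioi_mem_nhds hxm] with y hy
  have hs := summable_of_summable_hasDerivAt_of_isPreconnected hu isOpen_Ioi isPreconnected_Ioi hd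
    (norm_digamma_term_le hc) h1m h0 hy
  have := tendsto_nhds_unique hs.hasSum.tendsto_sum_nat (tendsto_sum_digamma (hc.trans hy))
  rw [this]
  ring

lemma hasDerivAt_term {y : ℝ} (hy : 0 < y) (k n : ℕ) :
    HasDerivAt (fun z : ℝ => 1 / (z + n) ^ (k + 2))
      (-(((k + 1 : ℕ) : ℝ) + 1) / (y + n) ^ (k + 1 + 2)) y := by
  have hp : y + n ≠ 0 := by positivity
  have h := (((hasDerivAt_id' y).add_const (n : ℝ)).fun_pow (k + 2)).fun_inv (pow_ne_zero _ hp)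
  simp only [one_div]
  refine h.congr_deriv ?_
  rw [show k + 2 - 1 = k + 1 from rfl]
  push_cast
  field_simp
  ring

lemma hasDerivAt_tsum_term {x : ℝ} (hx : 0 < x) (k : ℕ) :
    HasDerivAt (fun z : ℝ => ∑' n : ℕ, 1 / (z + n) ^ (k + 2))
      (∑' n : ℕ, -(((k + 1 : ℕ) : ℝ) + 1) / (x + n) ^ (k + 1 + 2)) x := by
  obtain ⟨c, hc, hcx⟩ := exists_between hx
  have h0 : Summable (fun n : ℕ => 1 / (x + (n : ℝ)) ^ (k + 2)) := by
    refine ((summable_term hx k).mul_left (1 / ((k : ℝ) + 1))).congr fun n => ?_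
    field_simp
  have hd (n : ℕ) (y : ℝ) (hy : y ∈ Ioi c) := hasDerivAt_term (hc.trans hy) k n
  have hb (n : ℕ) (y : ℝ) (hy : y ∈ Ioi c) :
      ‖-(((k + 1 : ℕ) : ℝ) + 1) / (y + n) ^ (k + 1 + 2)‖ ≤
        (((k + 1 : ℕ) : ℝ) + 1) / (c + n) ^ (k + 1 + 2) := by
    have hy' : c < y := hy
    have : 0 < y := hc.trans hy'
    rw [neg_div, norm_neg, Real.norm_of_nonneg (by positivity)]
    gcongr
  exact hasDerivAt_tsum_of_isPreconnected (summable_term hc (k + 1)) isOpen_Ioi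
    isPreconnected_Ioi hd hb (mem_Ioi.2 hcx) h0 (mem_Ioi.2 hcx)

lemma polygamma_succ_eq (k : ℕ) : ∀ x : ℝ, 0 < x →
    polygamma (k + 1) x = (-1) ^ k * (k + 1).factorial * ∑' n : ℕ, 1 / (x + n) ^ (k + 2) := by
  induction k with
  | zero =>
    intro x hx
    simpa [polygamma] using (hasDerivAt_digamma hx).deriv
  | succ k ih =>
    intro x hx
    have h1 : polygamma (k + 1 + 1) x = deriv (polygamma (k + 1)) x := by
      simp only [polygamma, Function.iterate_succ_apply']
    rw [h1]
    have h2 : polygamma (k + 1) =ᶠ[𝓝 x] fun z =>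
        (-1) ^ k * (k + 1).factorial * ∑' n : ℕ, 1 / (z + n) ^ (k + 2) := by
      filter_upwards [Ioi_mem_nhds hx] with y hy using ih y hy
    rw [h2.deriv_eq, ((hasDerivAt_tsum_term hx k).const_mul _).deriv]
    have h3 : ∑' n : ℕ, -(((k + 1 : ℕ) : ℝ) + 1) / (x + n) ^ (k + 1 + 2) =
        -(((k + 1 : ℕ) : ℝ) + 1) * ∑' n : ℕ, 1 / (x + n) ^ (k + 1 + 2) := by
      rw [← tsum_mul_left]
      simp only [mul_one_div]
    rw [h3, Nat.factorial_succ (k + 1)]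
    push_cast
    ring

theorem stmt_12 (x : ℝ) (hx : 0 < x) (k : ℕ) (hk : 1 ≤ k) :
    ((k - 1).factorial : ℝ) / x ^ k + (k.factorial : ℝ) / (2 * x ^ (k + 1)) <
        (-1 : ℝ) ^ (k + 1) * polygamma k x ∧
      (-1 : ℝ) ^ (k + 1) * polygamma k x <
        ((k - 1).factorial : ℝ) / x ^ k + (k.factorial : ℝ) / x ^ (k + 1) := by
  obtain ⟨k, rfl⟩ := Nat.exists_eq_add_of_le' hk
  have hmid : (-1 : ℝ) ^ (k + 1 + 1) * polygamma (k + 1) x =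
      k.factorial * ∑' n : ℕ, ((k : ℝ) + 1) / (x + n) ^ (k + 2) := by
    have h3 : ∑' n : ℕ, ((k : ℝ) + 1) / (x + n) ^ (k + 2) =
        ((k : ℝ) + 1) * ∑' n : ℕ, 1 / (x + n) ^ (k + 2) := by
      rw [← tsum_mul_left]
      simp only [mul_one_div]
    have hs : (-1 : ℝ) ^ k * (-1) ^ k = 1 := by
      rw [← mul_pow]; norm_num
    rw [polygamma_succ_eq k x hx, h3, Nat.factorial_succ]
    push_cast
    linear_combination ((k : ℝ) + 1) * k.factorial * (∑' n : ℕ, 1 / (x + n) ^ (k + 2)) * hs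
  have hf : (0 : ℝ) < k.factorial := by positivity
  have h1 := mul_lt_mul_of_pos_left (lower_lt_tsum hx k) hf
  have h2 := mul_lt_mul_of_pos_left (tsum_lt_upper hx k) hf
  rw [hmid]
  have e1 : ((k + 1 - 1).factorial : ℝ) / x ^ (k + 1) +
      ((k + 1).factorial : ℝ) / (2 * x ^ (k + 1 + 1)) = k.factorial * boundFun k (1 / 2) x := by
    rw [boundFun, Nat.factorial_succ, Nat.add_sub_cancel]
    push_cast
    field_simp
  have e2 : ((k + 1 - 1).factorial : ℝ) / x ^ (k + 1) +
      ((k + 1).factorial : ℝ) / x ^ (k + 1 + 1) = k.factorial * boundFun k 1 x := by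
    rw [boundFun, Nat.factorial_succ, Nat.add_sub_cancel]
    push_cast
    field_simp
  rw [e1, e2]
  exact ⟨h1, h2⟩
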